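/- (Achievability of the strong converse exponent for α ≥ 1.) Let α ∈ [1,∞]. For any discrete memoryless channel W: X → Y on finite alphabets and any r ≥ 0, the strong converse exponent satisfies E_sc^{(α)}(W,r) ≤ max{I_α(W) − r, 0}. -/

import Mathlib

open scoped ENNReal NNReal BigOperators Classical
open Filter

noncomputable section

namespace RST

/-- Base-2 logarithm `ℝ≥0∞ → EReal`, with `log 0 = ⊥` and `log ⊤ = ⊤`. -/
def elog2 (s : ℝ≥0∞) : EReal :=
  if s = 0 then ⊥ else if s = ⊤ then ⊤ else ((Real.logb 2 s.toReal : ℝ) : EReal)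

/-- Base-2 logarithm `EReal → EReal` (for nonnegative arguments). -/
def eLog2 (x : EReal) : EReal :=
  if x = ⊤ then ⊤ else if x ≤ 0 then ⊥ else ((Real.logb 2 x.toReal : ℝ) : EReal)

/-- Base-2 exponential `EReal → ℝ≥0∞`. -/
def epow2 (x : EReal) : ℝ≥0∞ :=
  if x = ⊤ then ⊤ else if x = ⊥ then 0 else ENNReal.ofReal ((2 : ℝ) ^ x.toReal)

variable {X Y : Type*}

/-- A probability distribution on a finite alphabet, as an `ℝ≥0∞`-valued function. -/
def IsDist [Fintype X] (P : X → ℝ≥0∞) : Prop := ∑ x, P x = 1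

/-- A discrete memoryless channel: every row is a probability distribution. -/
def IsChannel [Fintype X] [Fintype Y] (W : X → Y → ℝ≥0∞) : Prop := ∀ x, ∑ y, W x y = 1

/-- Order-`α` Rényi divergence (base 2), with the order `α ∈ [0,∞]` encoded as `ℝ≥0∞`.
The conventions `0/0 = 0` and `a/0 = ∞` (for `a > 0`, `α > 1`) are built into `ℝ≥0∞`
arithmetic.  The second argument is allowed to be an arbitrary nonnegative vector. -/
def renyiD [Fintype X] (α : ℝ≥0∞) (P Q : X → ℝ≥0∞) : EReal :=
  if α = 0 then - elog2 (∑ x ∈ Finset.univ.filter fun x => P x ≠ 0, Q x)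
  else if α = 1 then ∑ x, ((P x).toReal : EReal) * elog2 (P x / Q x)
  else if α = ⊤ then elog2 (⨆ x, P x / Q x)
  else (((α.toReal - 1)⁻¹ : ℝ) : EReal) *
    elog2 (∑ x, P x ^ α.toReal * Q x ^ (1 - α.toReal))

/-- The `X`-marginal of a joint distribution on `X × Y`. -/
def margX [Fintype X] [Fintype Y] (P : X × Y → ℝ≥0∞) : X → ℝ≥0∞ := fun x => ∑ y, P (x, y)

/-- Order-`α` Rényi mutual information `I_α(X:Y)_P = min_{Q_Y} D_α(P‖P_X × Q_Y)`. -/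
def renyiMI [Fintype X] [Fintype Y] (α : ℝ≥0∞) (P : X × Y → ℝ≥0∞) : EReal :=
  ⨅ Q : {Q : Y → ℝ≥0∞ // IsDist Q}, renyiD α P fun p => margX P p.1 * Q.1 p.2

/-- The joint input-output distribution `P_X · W`. -/
def joint [Fintype X] [Fintype Y] (PX : X → ℝ≥0∞) (W : X → Y → ℝ≥0∞) : X × Y → ℝ≥0∞ :=
  fun p => PX p.1 * W p.1 p.2

/-- Order-`α` Rényi capacity `I_α(W) = max_{P_X} I_α(X:Y)_{P_X · W}`. -/
def renyiCap [Fintype X] [Fintype Y] (α : ℝ≥0∞) (W : X → Y → ℝ≥0∞) : EReal :=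
  ⨆ P : {P : X → ℝ≥0∞ // IsDist P}, renyiMI α (joint P.1 W)

/-- `N` is a simulation of a channel `X → Y` with communication cost at most `c` bits:
shared randomness `K = Fin m` with distribution `PK`, a message set `{1,…,M}` with
`log₂ M ≤ c`, an encoder `E` and a decoder `D`. -/
def IsSimulation [Fintype X] [Fintype Y] (c : ℝ) (N : X → Y → ℝ≥0∞) : Prop :=
  ∃ (m M : ℕ) (PK : Fin m → ℝ≥0∞) (E : X → Fin m → Fin M → ℝ≥0∞)
    (D : Fin M → Fin m → Y → ℝ≥0∞),
    0 < M ∧ Real.logb 2 M ≤ c ∧ (∑ k, PK k = 1) ∧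
    (∀ x k, ∑ j, E x k j = 1) ∧ (∀ j k, ∑ y, D j k y = 1) ∧
    ∀ x y, N x y = ∑ k, ∑ j, PK k * E x k j * D j k y

/-- `D_α(W, N) := max_x D_α(W(·|x) ‖ N(·|x))`. -/
def chD [Fintype X] [Fintype Y] (α : ℝ≥0∞) (W N : X → Y → ℝ≥0∞) : EReal :=
  ⨆ x, renyiD α (W x) (N x)

/-- `𝖣_α(W, c) := min_{N ∈ A(W,c)} D_α(W, N)`. -/
def simD [Fintype X] [Fintype Y] (α : ℝ≥0∞) (W : X → Y → ℝ≥0∞) (c : ℝ) : EReal :=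
  ⨅ N : {N : X → Y → ℝ≥0∞ // IsSimulation c N}, chD α W N.1

/-- The `n`-fold memoryless extension `W^{×n}` of a channel `W`. -/
def prodCh [Fintype X] [Fintype Y] (n : ℕ) (W : X → Y → ℝ≥0∞) :
    (Fin n → X) → (Fin n → Y) → ℝ≥0∞ :=
  fun xs ys => ∏ i, W (xs i) (ys i)

/-- A sequence of communication costs with rate at most `r`. -/
def RateOK (r : ℝ) (c : ℕ → ℝ) : Prop :=
  (∀ n, 0 ≤ c n) ∧ Filter.limsup (fun n : ℕ => ((c n / n : ℝ) : EReal)) Filter.atTop ≤ (r : EReal)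

/-- Reliability function `E_rf^{(α)}(W, r)`. -/
def Erf [Fintype X] [Fintype Y] (α : ℝ≥0∞) (W : X → Y → ℝ≥0∞) (r : ℝ) : EReal :=
  ⨆ c : {c : ℕ → ℝ // RateOK r c},
    Filter.liminf
      (fun n : ℕ => (((-1 : ℝ) / n : ℝ) : EReal) * eLog2 (simD α (prodCh n W) (c.1 n)))
      Filter.atTop

/-- Strong converse exponent `E_sc^{(α)}(W, r)`. -/
def Esc [Fintype X] [Fintype Y] (α : ℝ≥0∞) (W : X → Y → ℝ≥0∞) (r : ℝ) : EReal :=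
  ⨅ c : {c : ℕ → ℝ // RateOK r c},
    Filter.limsup
      (fun n : ℕ => (((1 : ℝ) / n : ℝ) : EReal) * simD α (prodCh n W) (c.1 n))
      Filter.atTop

/-- The `α`-Rényi simulation rate `R_RST^{(α)}(W)`. -/
def Rrst [Fintype X] [Fintype Y] (α : ℝ≥0∞) (W : X → Y → ℝ≥0∞) : EReal :=
  ⨅ c : {c : ℕ → ℝ // (∀ n, 0 ≤ c n) ∧
      Filter.limsup (fun n : ℕ => simD α (prodCh n W) (c n)) Filter.atTop = 0},
    Filter.limsup (fun n : ℕ => ((c.1 n / n : ℝ) : EReal)) Filter.atTop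

/-- n-fold product of a joint distribution on `X × Y`, as a distribution on pairs of
sequences. -/
def prodJoint [Fintype X] [Fintype Y] (n : ℕ) (P : X × Y → ℝ≥0∞) :
    (Fin n → X) × (Fin n → Y) → ℝ≥0∞ :=
  fun p => ∏ i, P (p.1 i, p.2 i)

/-- n-fold product distribution. -/
def prodDist [Fintype X] (n : ℕ) (P : X → ℝ≥0∞) : (Fin n → X) → ℝ≥0∞ :=
  fun xs => ∏ i, P (xs i)

/-- The type (empirical count vector) of a sequence. -/
def seqType [Fintype Y] [DecidableEq Y] {n : ℕ} (ys : Fin n → Y) : Y → ℕ :=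
  fun y => (Finset.univ.filter fun i => ys i = y).card

/-- The cardinality of the type class of a sequence. -/
def typeClassCard [Fintype Y] [DecidableEq Y] {n : ℕ} (ys : Fin n → Y) : ℕ :=
  (Finset.univ.filter fun zs : Fin n → Y => seqType zs = seqType ys).card

/-- The number of types of sequences in `Y^n`. -/
def numTypes (Y : Type*) [Fintype Y] [DecidableEq Y] (n : ℕ) : ℕ :=
  (Finset.univ.image fun ys : Fin n → Y => seqType ys).card

/-- `Φ_{Y^n}`: the uniform mixture over type classes of `Y^n`. -/
def PhiY (Y : Type*) [Fintype Y] [DecidableEq Y] (n : ℕ) : (Fin n → Y) → ℝ≥0∞ :=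
  fun ys => ((numTypes Y n : ℝ≥0∞) * (typeClassCard ys : ℝ≥0∞))⁻¹

end RST

namespace RST

/-!
Fix `m > max (I_α(W) - r) 0`. For `α < ∞`, up to a monotone reparametrization, `D_α(P‖·)` is a
convex `f`-divergence, so a minimax argument turns `I_α(W) < r + m` into a single output
distribution `Q` of full support with `D_α(W(·|x)‖Q) < r + m` for every input `x`; for `α = ∞` a
near-optimal output distribution for the uniform input already has this property.

Sharing about `2^{nr}` codewords drawn from `Q^n`, a likelihood encoder simulates `W^n` by a channel
`N ≥ min(W^n, 2^{nr} Q^n) / 4`. For `α > 1`, truncating the second argument of `D_α` at the first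
costs at most `1/(α - 1)`, so `D_α(W^n‖N) ≤ n m + O(1)`. This constant is infinite at `α = 1`; there
the bound on `Q` persists at some order slightly above `1`, where the divergence is larger.
-/

theorem elog2_eq_log_div (s : ℝ≥0∞) : elog2 s = ENNReal.log s / ENNReal.log 2 := by
  have log_two : ENNReal.log 2 = (Real.log 2 : ℝ) := by simp [ENNReal.log_pos_real]
  have log_two_pos : (0 : EReal) < (Real.log 2 : ℝ) := mod_cast Real.log_pos one_lt_two
  unfold elog2
  split_ifs with h0 htop
  · rw [h0, log_two, ENNReal.log_zero, EReal.bot_div_of_pos_ne_top log_two_pos (EReal.coe_ne_top _)]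
  · rw [htop, log_two, ENNReal.log_top,
      EReal.top_div_of_pos_ne_top log_two_pos (EReal.coe_ne_top _)]
  · rw [ENNReal.log_pos_real h0 htop, log_two, ← EReal.coe_div, Real.logb]

theorem elog2_le_coe_iff {s : ℝ≥0∞} {c : ℝ} : elog2 s ≤ c ↔ s ≤ 2 ^ c := by
  rw [elog2_eq_log_div, EReal.div_le_iff_le_mul (by simp) (by simp), mul_comm,
    ← ENNReal.log_rpow, ENNReal.log_le_log_iff]

theorem elog2_lt_coe_iff {s : ℝ≥0∞} {c : ℝ} : elog2 s < c ↔ s < 2 ^ c := by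
  rw [elog2_eq_log_div, EReal.div_lt_iff (by simp) (by simp), ← ENNReal.log_rpow,
    ENNReal.log_lt_log_iff]

theorem elog2_mono : Monotone elog2 := fun s t hst => by
  simp only [elog2_eq_log_div]
  exact EReal.div_le_div_right_of_nonneg (by simp) (ENNReal.log_monotone hst)

theorem elog2_two_rpow_mul (d : ℝ) (s : ℝ≥0∞) : elog2 (2 ^ d * s) = d + elog2 s := by
  simp only [elog2_eq_log_div, ENNReal.log_mul_add, ENNReal.log_rpow]
  rw [EReal.add_div_of_nonneg_right (by simp), ← EReal.mul_div,
    EReal.div_self (by simp) (by simp) (by simp), mul_one]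

theorem coe_sum_ereal {ι : Type*} (s : Finset ι) (f : ι → ℝ) :
    ((∑ i ∈ s, f i : ℝ) : EReal) = ∑ i ∈ s, (f i : EReal) := by
  induction s using Finset.induction_on with
  | empty => simp
  | insert i s hi ih => rw [Finset.sum_insert hi, Finset.sum_insert hi, EReal.coe_add, ih]

theorem rpow_le_rpow_of_nonpos {s t : ℝ≥0∞} {z : ℝ} (hst : s ≤ t) (hz : z ≤ 0) :
    t ^ z ≤ s ^ z := by
  rw [← neg_neg z, ENNReal.rpow_neg, ENNReal.rpow_neg s]
  exact ENNReal.inv_le_inv.2 (ENNReal.rpow_le_rpow hst (neg_nonneg.2 hz))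

theorem two_rpow_mul_rpow (c : ℝ) (s : ℝ≥0∞) (z : ℝ) : (2 ^ c * s) ^ z = 2 ^ (c * z) * s ^ z := by
  rw [ENNReal.mul_rpow_eq_ite, if_neg (by simp), ENNReal.rpow_mul]

theorem one_le_two_rpow {c : ℝ} (hc : 0 ≤ c) : (1 : ℝ≥0∞) ≤ 2 ^ c := by
  simpa using ENNReal.rpow_le_rpow_of_exponent_le one_le_two hc

theorem elog2_prod_rpow {ι : Type*} (s : Finset ι) (f : ι → ℝ≥0∞) (w : ι → ℝ) :
    elog2 (∏ i ∈ s, f i ^ w i) = ∑ i ∈ s, (w i : EReal) * elog2 (f i) := by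
  induction s using Finset.induction_on with
  | empty => simp [elog2_eq_log_div]
  | insert i s hi ih =>
    rw [Finset.prod_insert hi, Finset.sum_insert hi, ← ih]
    simp only [elog2_eq_log_div, ENNReal.log_mul_add, ENNReal.log_rpow]
    rw [EReal.add_div_of_nonneg_right (by simp), EReal.mul_div]

section RenyiDivergence

variable {X : Type*} [Fintype X] {α : ℝ≥0∞} {P Q Q' : X → ℝ≥0∞}

theorem IsDist.ne_top (hP : IsDist P) (x : X) : P x ≠ ⊤ :=
  ENNReal.sum_ne_top.1 (hP.trans_ne ENNReal.one_ne_top) x (Finset.mem_univ x)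

theorem IsDist.sum_toReal (hP : IsDist P) : ∑ x, (P x).toReal = 1 := by
  rw [← ENNReal.toReal_sum fun x _ => hP.ne_top x, hP, ENNReal.toReal_one]

theorem one_lt_toReal (h1 : 1 < α) (htop : α ≠ ⊤) : 1 < α.toReal := by
  simpa using (ENNReal.toReal_lt_toReal ENNReal.one_ne_top htop).2 h1

/-- The order-`a` Rényi moment `∑ P^a Q^{1-a}`, so that `D_a = log₂ (renyiSum a) / (a - 1)` for
`1 < a < ∞`. -/
def renyiSum (a : ℝ) (P Q : X → ℝ≥0∞) : ℝ≥0∞ := ∑ x, P x ^ a * Q x ^ (1 - a)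

theorem renyiD_one : renyiD 1 P Q = ∑ x, ((P x).toReal : EReal) * elog2 (P x / Q x) := by
  simp [renyiD]

theorem renyiD_top : renyiD ⊤ P Q = elog2 (⨆ x, P x / Q x) := by
  simp [renyiD]

theorem renyiD_of_one_lt (h1 : 1 < α) (htop : α ≠ ⊤) :
    renyiD α P Q = (((α.toReal - 1)⁻¹ : ℝ) : EReal) * elog2 (renyiSum α.toReal P Q) := by
  rw [renyiD, if_neg (zero_lt_one.trans h1).ne', if_neg h1.ne', if_neg htop, renyiSum]

theorem renyiD_le_coe_iff (h1 : 1 < α) (htop : α ≠ ⊤) {c : ℝ} :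
    renyiD α P Q ≤ c ↔ renyiSum α.toReal P Q ≤ 2 ^ ((α.toReal - 1) * c) := by
  have hpos : (0 : EReal) < (α.toReal - 1 : ℝ) := mod_cast sub_pos.2 (one_lt_toReal h1 htop)
  rw [renyiD_of_one_lt h1 htop, EReal.coe_inv, ← EReal.div_eq_inv_mul,
    EReal.div_le_iff_le_mul hpos (EReal.coe_ne_top _), ← EReal.coe_mul, elog2_le_coe_iff]

theorem renyiD_lt_coe_iff (h1 : 1 < α) (htop : α ≠ ⊤) {c : ℝ} :
    renyiD α P Q < c ↔ renyiSum α.toReal P Q < 2 ^ ((α.toReal - 1) * c) := by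
  have hpos : (0 : EReal) < (α.toReal - 1 : ℝ) := mod_cast sub_pos.2 (one_lt_toReal h1 htop)
  rw [renyiD_of_one_lt h1 htop, EReal.coe_inv, ← EReal.div_eq_inv_mul,
    EReal.div_lt_iff hpos (EReal.coe_ne_top _), mul_comm, ← EReal.coe_mul, elog2_lt_coe_iff]

theorem renyiD_top_le_coe_iff {c : ℝ} : renyiD ⊤ P Q ≤ c ↔ ∀ x, P x ≤ 2 ^ c * Q x := by
  simp only [renyiD_top, elog2_le_coe_iff, iSup_le_iff]
  exact forall_congr' fun x => ENNReal.div_le_iff_le_mul (.inr (by simp)) (.inr (by simp))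

theorem div_le_two_rpow_mul_div {d : ℝ} {s t t' : ℝ≥0∞} (h : 2 ^ (-d) * t ≤ t') :
    s / t' ≤ 2 ^ d * (s / t) :=
  calc s / t' ≤ s / (2 ^ (-d) * t) := ENNReal.div_le_div_left h s
    _ = 2 ^ d * (s / t) := by
      rw [div_eq_mul_inv, ENNReal.mul_inv (.inl (by simp)) (.inl (by simp)), ENNReal.rpow_neg,
        inv_inv, mul_left_comm, div_eq_mul_inv]

theorem renyiSum_le_mul {a d : ℝ} (ha : 1 ≤ a) (h : ∀ x, 2 ^ (-d) * Q x ≤ Q' x) :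
    renyiSum a P Q' ≤ 2 ^ ((a - 1) * d) * renyiSum a P Q := by
  rw [renyiSum, renyiSum, Finset.mul_sum]
  refine Finset.sum_le_sum fun x _ => ?_
  calc P x ^ a * Q' x ^ (1 - a) ≤ P x ^ a * (2 ^ (-d) * Q x) ^ (1 - a) :=
        mul_le_mul' le_rfl (rpow_le_rpow_of_nonpos (h x) (sub_nonpos.2 ha))
    _ = 2 ^ ((a - 1) * d) * (P x ^ a * Q x ^ (1 - a)) := by
        rw [two_rpow_mul_rpow, mul_left_comm]
        ring_nf

theorem renyiD_one_le_add {d : ℝ} (hP : IsDist P) (h : ∀ x, 2 ^ (-d) * Q x ≤ Q' x) :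
    renyiD 1 P Q' ≤ d + renyiD 1 P Q :=
  calc renyiD 1 P Q' ≤ ∑ x, ((P x).toReal : EReal) * (d + elog2 (P x / Q x)) := by
        rw [renyiD_one]
        refine Finset.sum_le_sum fun x _ => ?_
        gcongr
        exact (elog2_mono (div_le_two_rpow_mul_div (h x))).trans_eq (elog2_two_rpow_mul _ _)
    _ = ∑ x, (((P x).toReal * d : ℝ) : EReal) + renyiD 1 P Q := by
        rw [renyiD_one, ← Finset.sum_add_distrib]
        refine Finset.sum_congr rfl fun x _ => ?_
        rw [EReal.left_distrib_of_nonneg_of_ne_top (by simp) (EReal.coe_ne_top _), EReal.coe_mul]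
    _ = d + renyiD 1 P Q := by
        rw [← coe_sum_ereal, ← Finset.sum_mul, hP.sum_toReal, one_mul]

theorem renyiD_le_add {d : ℝ} (h1 : 1 ≤ α) (hP : IsDist P) (h : ∀ x, 2 ^ (-d) * Q x ≤ Q' x) :
    renyiD α P Q' ≤ d + renyiD α P Q := by
  rcases h1.eq_or_lt with rfl | h1
  · exact renyiD_one_le_add hP h
  rcases eq_or_ne α ⊤ with rfl | htop
  · rw [renyiD_top, renyiD_top, ← elog2_two_rpow_mul, ENNReal.mul_iSup]
    exact elog2_mono (iSup_mono fun x => div_le_two_rpow_mul_div (h x))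
  have ha := one_lt_toReal h1 htop
  have hinv : (0 : EReal) ≤ ((α.toReal - 1)⁻¹ : ℝ) := mod_cast inv_nonneg.2 (sub_nonneg.2 ha.le)
  calc renyiD α P Q'
      ≤ ((α.toReal - 1)⁻¹ : ℝ) *
          (((α.toReal - 1) * d : ℝ) + elog2 (renyiSum α.toReal P Q)) := by
        rw [renyiD_of_one_lt h1 htop, ← elog2_two_rpow_mul]
        exact mul_le_mul_of_nonneg_left (elog2_mono (renyiSum_le_mul ha.le h)) hinv
    _ = d + renyiD α P Q := by
        rw [EReal.left_distrib_of_nonneg_of_ne_top hinv (EReal.coe_ne_top _), ← EReal.coe_mul,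
          inv_mul_cancel_left₀ (sub_pos.2 ha).ne', renyiD_of_one_lt h1 htop]

theorem renyiSum_eq_sum_mul {a : ℝ} (ha : 1 ≤ a) :
    renyiSum a P Q = ∑ x, P x * (P x / Q x) ^ (a - 1) := by
  refine Finset.sum_congr rfl fun x _ => ?_
  have hsplit : P x ^ a = P x * P x ^ (a - 1) := by
    simpa using ENNReal.rpow_add_of_nonneg (x := P x) 1 (a - 1) zero_le_one (sub_nonneg.2 ha)
  rw [hsplit, ENNReal.div_rpow_of_nonneg _ _ (sub_nonneg.2 ha), div_eq_mul_inv,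
    ← ENNReal.rpow_neg, neg_sub, mul_assoc]

theorem prod_rpow_le_sum_mul (hP : IsDist P) (u : X → ℝ≥0∞) (hu : ∀ x, P x = 0 → u x ≠ ⊤) :
    ∏ x, u x ^ (P x).toReal ≤ ∑ x, P x * u x := by
  by_cases htop : ∃ x, u x = ⊤
  · obtain ⟨x, hx⟩ := htop
    have hPx : P x ≠ 0 := fun h => hu x h hx
    refine le_top.trans_eq (ENNReal.sum_eq_top.2 ⟨x, Finset.mem_univ x, ?_⟩).symm
    rw [hx, ENNReal.mul_top hPx]
  push Not at htop
  lift u to X → ℝ≥0 using htop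
  lift P to X → ℝ≥0 using hP.ne_top
  have hP' : ∑ x, P x = 1 := by exact_mod_cast (show ∑ x, (P x : ℝ≥0∞) = 1 from hP)
  simpa [← ENNReal.coe_rpow_of_nonneg] using
    ENNReal.coe_le_coe.2 (NNReal.geom_mean_le_arith_mean_weighted Finset.univ P u hP')

theorem renyiD_one_le_of_one_lt (h1 : 1 < α) (htop : α ≠ ⊤) (hP : IsDist P) :
    renyiD 1 P Q ≤ renyiD α P Q := by
  have ha := sub_pos.2 (one_lt_toReal h1 htop)
  refine EReal.le_of_forall_lt_iff_le.1 fun c hc => ?_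
  rw [renyiD_one, ← elog2_prod_rpow, elog2_le_coe_iff, ← ENNReal.rpow_le_rpow_iff ha]
  calc (∏ x, (P x / Q x) ^ (P x).toReal) ^ (α.toReal - 1)
      = ∏ x, ((P x / Q x) ^ (α.toReal - 1)) ^ (P x).toReal := by
        rw [← ENNReal.prod_rpow_of_nonneg ha.le]
        simp only [← ENNReal.rpow_mul, mul_comm]
    _ ≤ ∑ x, P x * (P x / Q x) ^ (α.toReal - 1) :=
        prod_rpow_le_sum_mul hP _ fun x hx => by simp [hx, ha]
    _ = renyiSum α.toReal P Q := (renyiSum_eq_sum_mul (sub_pos.1 ha).le).symm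
    _ ≤ (2 ^ c) ^ (α.toReal - 1) := by
        rw [← ENNReal.rpow_mul, mul_comm]
        exact (renyiD_le_coe_iff h1 htop).1 hc.le

theorem rpow_mul_inf_rpow_le {a : ℝ} (ha : 1 ≤ a) {s t : ℝ≥0∞} (hs : s ≠ ⊤) :
    s ^ a * (s ⊓ t) ^ (1 - a) ≤ s + s ^ a * t ^ (1 - a) := by
  rcases le_total s t with hst | hst
  · rw [inf_eq_left.2 hst]
    refine le_add_right ?_
    rcases eq_or_ne s 0 with rfl | hs0
    · simp [ENNReal.zero_rpow_of_pos (zero_lt_one.trans_le ha)]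
    · rw [← ENNReal.rpow_add _ _ hs0 hs, add_sub_cancel, ENNReal.rpow_one]
  · rw [inf_eq_right.2 hst]
    exact le_add_self

theorem renyiD_inf_le {m : ℝ} (h1 : 1 < α) (hP : IsDist P) (hm : 0 ≤ m) (h : renyiD α P Q ≤ m) :
    renyiD α P (P ⊓ Q) ≤ (((α - 1)⁻¹.toReal + m : ℝ) : EReal) := by
  rcases eq_or_ne α ⊤ with rfl | htop
  · rw [renyiD_top_le_coe_iff] at h ⊢
    have hzero : (⊤ - 1 : ℝ≥0∞)⁻¹.toReal = 0 := by simp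
    intro x
    rw [hzero, zero_add, Pi.inf_apply, mul_min]
    exact le_min (le_mul_of_one_le_left' (one_le_two_rpow hm)) (h x)
  rw [renyiD_le_coe_iff h1 htop] at h ⊢
  set a := α.toReal
  have ha : 1 < a := one_lt_toReal h1 htop
  have hcoe : (α - 1)⁻¹.toReal = (a - 1)⁻¹ := by
    rw [ENNReal.toReal_inv, ENNReal.toReal_sub_of_le h1.le htop, ENNReal.toReal_one]
  calc renyiSum a P (P ⊓ Q) ≤ 1 + renyiSum a P Q := by
        rw [renyiSum, renyiSum, ← hP, ← Finset.sum_add_distrib]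
        exact Finset.sum_le_sum fun x _ => rpow_mul_inf_rpow_le ha.le (hP.ne_top x)
    _ ≤ 2 ^ ((a - 1) * m) + 2 ^ ((a - 1) * m) := by
        gcongr
        exact one_le_two_rpow (mul_nonneg (sub_pos.2 ha).le hm)
    _ = 2 ^ ((a - 1) * ((α - 1)⁻¹.toReal + m)) := by
        rw [hcoe, mul_add, mul_inv_cancel₀ (sub_pos.2 ha).ne',
          ENNReal.rpow_add _ _ two_ne_zero ENNReal.ofNat_ne_top, ENNReal.rpow_one, two_mul]

theorem renyiSum_pi {ι : Type*} [Fintype ι] [DecidableEq ι] {a : ℝ} (ha : 0 ≤ a)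
    (P Q : ι → X → ℝ≥0∞) (hQ : ∀ i x, Q i x ≠ ⊤) :
    renyiSum a (fun xs : ι → X => ∏ i, P i (xs i)) (fun xs => ∏ i, Q i (xs i)) =
      ∏ i, renyiSum a (P i) (Q i) := by
  simp only [renyiSum, Fintype.prod_sum, Finset.prod_mul_distrib, ENNReal.prod_rpow_of_nonneg ha]
  refine Finset.sum_congr rfl fun xs _ => ?_
  rw [ENNReal.prod_rpow_of_ne_top fun i _ => hQ i (xs i)]

theorem prod_two_rpow (ι : Type*) [Fintype ι] (c : ℝ) :
    ∏ _ : ι, (2 : ℝ≥0∞) ^ c = 2 ^ (Fintype.card ι * c) := by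
  rw [Finset.prod_const, Finset.card_univ, ← ENNReal.rpow_mul_natCast, mul_comm]

theorem renyiD_pi_le {ι : Type*} [Fintype ι] [DecidableEq ι] (h1 : 1 < α)
    {P Q : ι → X → ℝ≥0∞} {c : ℝ} (hQ : ∀ i x, Q i x ≠ ⊤) (h : ∀ i, renyiD α (P i) (Q i) ≤ c) :
    renyiD α (fun xs : ι → X => ∏ i, P i (xs i)) (fun xs => ∏ i, Q i (xs i)) ≤
      ((Fintype.card ι * c : ℝ) : EReal) := by
  rcases eq_or_ne α ⊤ with rfl | htop
  · simp only [renyiD_top_le_coe_iff] at h ⊢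
    intro xs
    rw [← prod_two_rpow, ← Finset.prod_mul_distrib]
    exact Finset.prod_le_prod' fun i _ => h i (xs i)
  · simp only [renyiD_le_coe_iff h1 htop] at h ⊢
    rw [renyiSum_pi ENNReal.toReal_nonneg P Q hQ, mul_left_comm, ← prod_two_rpow]
    exact Finset.prod_le_prod' fun i _ => h i

end RenyiDivergence

section LikelihoodEncoder

variable {A B : Type*} [Fintype A] [Fintype B]

theorem isSimulation_of_fintype {K : Type*} [Fintype K] {c : ℝ} {M : ℕ} (hM : 0 < M)
    (hMc : Real.logb 2 M ≤ c) {PK : K → ℝ≥0∞} (hPK : IsDist PK) {E : A → K → Fin M → ℝ≥0∞}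
    (hE : ∀ a, IsChannel (E a)) {D : Fin M → K → B → ℝ≥0∞} (hD : ∀ j, IsChannel (D j)) :
    IsSimulation c fun a b => ∑ k, ∑ j, PK k * E a k j * D j k b := by
  let e := (Fintype.equivFin K).symm
  refine ⟨Fintype.card K, M, PK ∘ e, fun a => E a ∘ e, fun j => D j ∘ e, hM, hMc,
    (e.sum_comp PK).trans hPK, fun a k => hE a (e k), fun j k => hD j (e k), fun a b => ?_⟩
  exact (e.sum_comp fun k => ∑ j, PK k * E a k j * D j k b).symm

theorem sum_prod_eq_one {ι : Type*} [Fintype ι] [DecidableEq ι] {Q : B → ℝ≥0} (hQ : ∑ b, Q b = 1) :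
    ∑ k : ι → B, ∏ i, Q (k i) = 1 := by
  rw [← Fintype.prod_sum fun _ : ι => Q]
  simp [hQ]

theorem sum_prod_mul_sum {ι : Type*} [Fintype ι] [DecidableEq ι] {Q : B → ℝ≥0} (hQ : ∑ b, Q b = 1)
    (w : B → ℝ≥0) :
    ∑ k : ι → B, (∏ i, Q (k i)) * ∑ j, w (k j) = Fintype.card ι * ∑ b, Q b * w b := by
  have mean : ∀ j : ι, ∑ k : ι → B, (∏ i, Q (k i)) * w (k j) = ∑ b, Q b * w b := fun j =>
    calc ∑ k : ι → B, (∏ i, Q (k i)) * w (k j)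
        = ∑ k : ι → B, ∏ i, Q (k i) * if i = j then w (k i) else 1 := by
          simp only [Finset.prod_mul_distrib, Finset.prod_ite_eq', Finset.mem_univ, if_true]
      _ = ∏ i, ∑ b, Q b * if i = j then w b else 1 :=
          (Fintype.prod_sum fun i b => Q b * if i = j then w b else 1).symm
      _ = ∏ i, if i = j then ∑ b, Q b * w b else 1 := by
          refine Finset.prod_congr rfl fun i _ => ?_
          split_ifs <;> simp [hQ]
      _ = ∑ b, Q b * w b := by simp
  simp only [Finset.mul_sum, Finset.sum_comm (s := (Finset.univ : Finset (ι → B))), mean]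
  rw [Finset.sum_const, Finset.card_univ, nsmul_eq_mul, Finset.mul_sum]

theorem inv_sum_mul_le_sum_mul_inv {ι : Type*} [Fintype ι] {p s : ι → ℝ≥0} (hp : ∑ i, p i = 1)
    (hs : ∀ i, 0 < s i) : (∑ i, p i * s i)⁻¹ ≤ ∑ i, p i * (s i)⁻¹ := by
  rw [← one_div]
  refine NNReal.div_le_of_le_mul' ?_
  calc 1 = (∑ i, p i) ^ 2 := by rw [hp, one_pow]
    _ ≤ (∑ i, p i * s i) * ∑ i, p i * (s i)⁻¹ := by
        refine Finset.sum_sq_le_sum_mul_sum_of_sq_le_mul _ (fun _ _ => zero_le) (fun _ _ => zero_le)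
          fun i _ => le_of_eq ?_
        rw [mul_mul_mul_comm, mul_inv_cancel₀ (hs i).ne', mul_one, sq]

/-- The output law of a likelihood encoder: sender and receiver share `M` independent codewords
`k j` drawn from `Q`, the sender transmits `j` with probability proportional to the likelihood
ratio `w (k j)`, and the receiver outputs `k j`. -/
def likelihoodOutput (M : ℕ) (Q w : B → ℝ≥0) (b : B) : ℝ≥0 :=
  ∑ k : Fin M → B, ∑ j, (∏ i, Q (k i)) * (w (k j) / ∑ i, w (k i)) * if k j = b then 1 else 0

theorem isSimulation_likelihoodOutput {c : ℝ} {M : ℕ} (hM : 0 < M) (hMc : Real.logb 2 M ≤ c)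
    {Q : B → ℝ≥0} (hQ : ∑ b, Q b = 1) {w : A → B → ℝ≥0} (hw : ∀ a b, 0 < w a b) :
    IsSimulation c fun a b => (likelihoodOutput M Q (w a) b : ℝ≥0∞) := by
  have : NeZero M := ⟨hM.ne'⟩
  convert isSimulation_of_fintype (K := Fin M → B) hM hMc
    (PK := fun k => ((∏ i, Q (k i) : ℝ≥0) : ℝ≥0∞))
    (E := fun a k j => ((w a (k j) / ∑ i, w a (k i) : ℝ≥0) : ℝ≥0∞))
    (D := fun j k b => if k j = b then 1 else 0) ?_ ?_ ?_ using 3 with a b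
  · simp only [likelihoodOutput]
    push_cast
    refine Finset.sum_congr rfl fun k _ => Finset.sum_congr rfl fun j _ => ?_
    split_ifs <;> simp
  · rw [IsDist]
    exact_mod_cast sum_prod_eq_one (ι := Fin M) hQ
  · intro a k
    have hpos : 0 < ∑ i, w a (k i) := Finset.sum_pos (fun i _ => hw a (k i)) Finset.univ_nonempty
    rw [← ENNReal.ofNNReal_finsetSum, ← Finset.sum_div, div_self hpos.ne', ENNReal.coe_one]
  · intro j k
    simp

theorem sum_pi_eq_sum_insertNth {m : ℕ} (j : Fin (m + 1)) (f : (Fin (m + 1) → B) → ℝ≥0) :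
    ∑ k, f k = ∑ b, ∑ l : Fin m → B, f (j.insertNth b l) := by
  rw [← (Fin.insertNthEquiv (fun _ => B) j).sum_comp f, Fintype.sum_prod_type]
  rfl

theorem le_likelihoodOutput (m : ℕ) {Q w : B → ℝ≥0} (hQ : ∑ b, Q b = 1) (hw : ∀ b, 0 < w b)
    (hQw : ∑ b, Q b * w b = 1) (b : B) :
    (m + 1) * (Q b * (w b / (w b + m))) ≤ likelihoodOutput (m + 1) Q w b := by
  -- Jensen's inequality for `t ↦ t⁻¹` averages over the codewords other than the transmitted one.
  have harmonic : (w b + m)⁻¹ ≤ ∑ l : Fin m → B, (∏ i, Q (l i)) * (w b + ∑ i, w (l i))⁻¹ := by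
    convert inv_sum_mul_le_sum_mul_inv (sum_prod_eq_one (ι := Fin m) hQ)
      (s := fun l => w b + ∑ i, w (l i)) (fun l => add_pos_of_pos_of_nonneg (hw b) zero_le) using 2
    simp_rw [mul_add, Finset.sum_add_distrib, ← Finset.sum_mul]
    rw [sum_prod_eq_one hQ, sum_prod_mul_sum hQ, hQw, Fintype.card_fin, one_mul, mul_one]
  have codeword : ∀ j : Fin (m + 1), ∑ k : Fin (m + 1) → B,
      (∏ i, Q (k i)) * (w (k j) / ∑ i, w (k i)) * (if k j = b then 1 else 0) =
        Q b * (w b * ∑ l : Fin m → B, (∏ i, Q (l i)) * (w b + ∑ i, w (l i))⁻¹) := fun j => by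
    rw [sum_pi_eq_sum_insertNth j]
    simp only [Fin.prod_univ_succAbove _ j, Fin.sum_univ_succAbove _ j, Fin.insertNth_apply_same,
      Fin.insertNth_apply_succAbove, mul_ite, mul_one, mul_zero, Finset.sum_ite_irrel,
      Finset.sum_const_zero, Finset.sum_ite_eq', Finset.mem_univ, if_true, Finset.mul_sum]
    exact Finset.sum_congr rfl fun l _ => by ring
  rw [likelihoodOutput, Finset.sum_comm]
  simp only [codeword, Finset.sum_const, Finset.card_univ, Fintype.card_fin, nsmul_eq_mul]
  rw [div_eq_mul_inv]
  push_cast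
  gcongr

theorem half_min_le_mul_div_add {w m : ℝ≥0} (hw : 0 < w) :
    2⁻¹ * min w (m + 1) ≤ (m + 1) * (w / (w + m)) := by
  rw [inv_mul_le_iff₀ two_pos, ← mul_div_assoc, ← mul_div_assoc, le_div_iff₀ (by positivity)]
  calc min w (m + 1) * (w + m) = min w (m + 1) * w + min w (m + 1) * m := mul_add _ _ _
    _ ≤ (m + 1) * w + w * (m + 1) := by
        gcongr
        exacts [min_le_right _ _, min_le_left _ _, le_self_add]
    _ = 2 * ((m + 1) * w) := by ring

theorem exists_nat_add_one_le_rpow_le {c : ℝ} (hc : 0 ≤ c) :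
    ∃ m : ℕ, (m + 1 : ℝ≥0) ≤ 2 ^ c ∧ (2 : ℝ≥0) ^ c ≤ 2 * (m + 1) := by
  obtain ⟨m, hm⟩ : ∃ m, ⌊(2 : ℝ≥0) ^ c⌋₊ = m + 1 :=
    Nat.exists_eq_add_one.2 (Nat.floor_pos.2 (NNReal.one_le_rpow one_le_two hc))
  have floor_le := Nat.floor_le (zero_le (a := (2 : ℝ≥0) ^ c))
  have lt_floor := Nat.lt_floor_add_one ((2 : ℝ≥0) ^ c)
  rw [hm] at floor_le lt_floor
  push_cast at floor_le lt_floor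
  refine ⟨m, floor_le, lt_floor.le.trans ?_⟩
  rw [two_mul]
  gcongr
  exact le_add_self

theorem exists_isSimulation_min_le_nnreal {V : A → B → ℝ≥0} (hV : ∀ a, ∑ b, V a b = 1)
    {Q : B → ℝ≥0} (hQ : ∑ b, Q b = 1) (hQpos : ∀ b, 0 < Q b) {c : ℝ} (hc : 0 ≤ c) :
    ∃ N : A → B → ℝ≥0, IsSimulation c (fun a b => (N a b : ℝ≥0∞)) ∧
      ∀ a b, 2⁻¹ * (2⁻¹ * min (V a b) (2 ^ c * Q b)) ≤ N a b := by
  obtain ⟨m, hm_le, le_hm⟩ := exists_nat_add_one_le_rpow_le hc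
  -- Averaging the likelihood ratio with `1` keeps the encoder well defined where `V` vanishes.
  set w : A → B → ℝ≥0 := fun a b => 2⁻¹ * (V a b / Q b + 1) with hw
  have hQw : ∀ a b, Q b * w a b = 2⁻¹ * (V a b + Q b) := fun a b => by
    rw [hw, mul_left_comm, mul_add, mul_div_cancel₀ _ (hQpos b).ne', mul_one]
  have hQw_sum : ∀ a, ∑ b, Q b * w a b = 1 := fun a => by
    simp only [hQw, ← Finset.mul_sum, Finset.sum_add_distrib, hV, hQ]
    norm_num
  have hwpos : ∀ a b, 0 < w a b := fun a b => by positivity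
  have hM : Real.logb 2 (m + 1 : ℕ) ≤ c := by
    rw [Real.logb_le_iff_le_rpow one_lt_two (by positivity)]
    exact_mod_cast hm_le
  have min_le : ∀ a b, 2⁻¹ * min (V a b) (2 ^ c * Q b) ≤ Q b * min (w a b) (m + 1) := fun a b => by
    rw [mul_min, mul_min, hQw]
    refine min_le_min (mul_le_mul' le_rfl le_self_add) ?_
    rw [← mul_assoc, mul_comm (Q b)]
    exact mul_le_mul' ((inv_mul_le_iff₀ two_pos).2 le_hm) le_rfl
  refine ⟨_, isSimulation_likelihoodOutput m.succ_pos hM hQ hwpos, fun a b => ?_⟩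
  calc 2⁻¹ * (2⁻¹ * min (V a b) (2 ^ c * Q b))
      ≤ 2⁻¹ * (Q b * min (w a b) (m + 1)) := mul_le_mul' le_rfl (min_le a b)
    _ = Q b * (2⁻¹ * min (w a b) (m + 1)) := mul_left_comm _ _ _
    _ ≤ Q b * ((m + 1) * (w a b / (w a b + m))) :=
        mul_le_mul' le_rfl (half_min_le_mul_div_add (hwpos a b))
    _ = (m + 1) * (Q b * (w a b / (w a b + m))) := mul_left_comm _ _ _
    _ ≤ likelihoodOutput (m + 1) Q (w a) b := le_likelihoodOutput m hQ (hwpos a) (hQw_sum a) b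

theorem exists_isSimulation_min_le {V : A → B → ℝ≥0∞} (hV : IsChannel V) {Q : B → ℝ≥0∞}
    (hQ : IsDist Q) (hQ0 : ∀ b, Q b ≠ 0) {c : ℝ} (hc : 0 ≤ c) :
    ∃ N, IsSimulation c N ∧ ∀ a b, 2 ^ (-2 : ℝ) * min (V a b) (2 ^ c * Q b) ≤ N a b := by
  lift Q to B → ℝ≥0 using hQ.ne_top
  lift V to A → B → ℝ≥0 using fun a => IsDist.ne_top (hV a)
  obtain ⟨N, hN, le_N⟩ := exists_isSimulation_min_le_nnreal (V := V) (Q := Q)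
    (fun a => by exact_mod_cast (show ∑ b, (V a b : ℝ≥0∞) = 1 from hV a))
    (by exact_mod_cast (show ∑ b, (Q b : ℝ≥0∞) = 1 from hQ))
    (fun b => by simpa [pos_iff_ne_zero] using hQ0 b) hc
  have two_rpow : (2 : ℝ≥0∞) ^ (-2 : ℝ) = ((2⁻¹ * 2⁻¹ : ℝ≥0) : ℝ≥0∞) := by
    rw [show (2 : ℝ≥0∞) = ((2 : ℝ≥0) : ℝ≥0∞) from rfl, ← ENNReal.coe_rpow_of_ne_zero two_ne_zero]
    norm_num [NNReal.rpow_neg, ← mul_inv]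
  refine ⟨_, hN, fun a b => ?_⟩
  rw [two_rpow, show (2 : ℝ≥0∞) = ((2 : ℝ≥0) : ℝ≥0∞) from rfl, ← ENNReal.coe_rpow_of_nonneg _ hc]
  beta_reduce
  exact_mod_cast (mul_assoc _ _ _).trans_le (le_N a b)

end LikelihoodEncoder

section Achievability

variable {X Y : Type*} [Fintype X] [Fintype Y] {W : X → Y → ℝ≥0∞} {Q : Y → ℝ≥0∞} {α : ℝ≥0∞}

theorem exists_isSimulation_chD_le (h1 : 1 < α) (hW : IsChannel W) (hQ : IsDist Q)
    (hQ0 : ∀ y, Q y ≠ 0) {c m : ℝ} (hc : 0 ≤ c) (hm : 0 ≤ m)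
    (h : chD α W (fun _ => Q) ≤ ((c + m : ℝ) : EReal)) :
    ∃ N, IsSimulation c N ∧ chD α W N ≤ ((2 + (α - 1)⁻¹.toReal + m : ℝ) : EReal) := by
  obtain ⟨N, hN, le_N⟩ := exists_isSimulation_min_le hW hQ hQ0 hc
  refine ⟨N, hN, iSup_le fun x => ?_⟩
  have scaled : renyiD α (W x) (fun y => 2 ^ c * Q y) ≤ m :=
    calc renyiD α (W x) (fun y => 2 ^ c * Q y) ≤ (-c : ℝ) + renyiD α (W x) Q :=
          renyiD_le_add h1.le (hW x) fun y => by rw [neg_neg]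
      _ ≤ (-c : ℝ) + (c + m : ℝ) := by gcongr; exact (le_iSup _ x).trans h
      _ = m := by rw [← EReal.coe_add, neg_add_cancel_left]
  calc renyiD α (W x) (N x)
      ≤ (2 : ℝ) + renyiD α (W x) (W x ⊓ fun y => 2 ^ c * Q y) :=
        renyiD_le_add h1.le (hW x) fun y => le_N x y
    _ ≤ (2 : ℝ) + ((α - 1)⁻¹.toReal + m : ℝ) := by
        gcongr
        exact renyiD_inf_le h1 (hW x) hm scaled
    _ = ((2 + (α - 1)⁻¹.toReal + m : ℝ) : EReal) := by rw [← EReal.coe_add, add_assoc]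

theorem isDist_prod {ι : Type*} [Fintype ι] [DecidableEq ι] {P : ι → Y → ℝ≥0∞}
    (hP : ∀ i, IsDist (P i)) : IsDist fun ys : ι → Y => ∏ i, P i (ys i) := by
  rw [IsDist, ← Fintype.prod_sum]
  exact Finset.prod_eq_one fun i _ => hP i

theorem isChannel_prodCh (hW : IsChannel W) (n : ℕ) : IsChannel (prodCh n W) :=
  fun xs => isDist_prod fun i => hW (xs i)

theorem chD_prodCh_le (h1 : 1 < α) (hQ : IsDist Q) {c : ℝ} (h : chD α W (fun _ => Q) ≤ c) (n : ℕ) :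
    chD α (prodCh n W) (fun _ => prodDist n Q) ≤ ((n * c : ℝ) : EReal) := by
  refine iSup_le fun xs => ?_
  have := renyiD_pi_le (ι := Fin n) h1 (fun _ => hQ.ne_top)
    fun i => (le_iSup (fun x => renyiD α (W x) Q) (xs i)).trans h
  rwa [Fintype.card_fin] at this

theorem rateOK_mul {r : ℝ} (hr : 0 ≤ r) : RateOK r fun n => n * r := by
  refine ⟨fun n => by positivity, ?_⟩
  have rate : Tendsto (fun n : ℕ => ((n * r / n : ℝ) : EReal)) atTop (nhds r) := by
    refine tendsto_const_nhds.congr' ?_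
    filter_upwards [eventually_ne_atTop 0] with n hn
    rw [mul_div_cancel_left₀ r (Nat.cast_ne_zero.2 hn)]
  exact rate.limsup_eq.le

theorem esc_le_of_forall_simD_le {r K m : ℝ} (hr : 0 ≤ r)
    (h : ∀ n : ℕ, simD α (prodCh n W) (n * r) ≤ ((K + n * m : ℝ) : EReal)) : Esc α W r ≤ m := by
  have bound : Tendsto (fun n : ℕ => ((K / n + m : ℝ) : EReal)) atTop (nhds m) := by
    refine (continuous_coe_real_ereal.tendsto m).comp ?_
    simpa using (tendsto_const_div_atTop_nhds_zero_nat K).add_const m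
  refine (iInf_le _ ⟨_, rateOK_mul hr⟩).trans ?_
  rw [← bound.limsup_eq]
  refine limsup_le_limsup ?_
  filter_upwards [eventually_ne_atTop 0] with n hn
  have hn0 : (n : ℝ) ≠ 0 := Nat.cast_ne_zero.2 hn
  calc (((1 : ℝ) / n : ℝ) : EReal) * simD α (prodCh n W) (n * r)
      ≤ (((1 : ℝ) / n : ℝ) : EReal) * ((K + n * m : ℝ) : EReal) :=
        mul_le_mul_of_nonneg_left (h n) (mod_cast (by positivity : (0 : ℝ) ≤ 1 / n))
    _ = ((K / n + m : ℝ) : EReal) := by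
        rw [← EReal.coe_mul]
        congr 1
        field_simp

theorem esc_le_of_one_lt (h1 : 1 < α) (hW : IsChannel W) (hQ : IsDist Q) (hQ0 : ∀ y, Q y ≠ 0)
    {r m : ℝ} (hr : 0 ≤ r) (hm : 0 ≤ m) (h : chD α W (fun _ => Q) ≤ ((r + m : ℝ) : EReal)) :
    Esc α W r ≤ m := by
  refine esc_le_of_forall_simD_le (K := 2 + (α - 1)⁻¹.toReal) hr fun n => ?_
  have hQn : IsDist (prodDist n Q) := isDist_prod fun _ => hQ
  have hQn0 : ∀ ys, prodDist n Q ys ≠ 0 := fun ys =>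
    Finset.prod_ne_zero_iff.2 fun i _ => hQ0 (ys i)
  have hn := chD_prodCh_le h1 hQ h n
  rw [mul_add] at hn
  obtain ⟨N, hN, hD⟩ := exists_isSimulation_chD_le h1 (isChannel_prodCh hW n) hQn hQn0
    (mul_nonneg n.cast_nonneg hr) (mul_nonneg n.cast_nonneg hm) hn
  exact iInf_le_of_le ⟨N, hN⟩ hD

theorem esc_one_le_of_one_lt (h1 : 1 < α) (htop : α ≠ ⊤) (hW : IsChannel W) (r : ℝ) :
    Esc 1 W r ≤ Esc α W r := by
  refine iInf_mono fun c => limsup_le_limsup (.of_forall fun n => ?_)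
  refine mul_le_mul_of_nonneg_left ?_ (mod_cast (by positivity : (0 : ℝ) ≤ 1 / n))
  exact iInf_mono fun N => iSup_mono fun xs =>
    renyiD_one_le_of_one_lt h1 htop (isChannel_prodCh hW n xs)

end Achievability

section Minimax

variable {ι E : Type*} {S : Set E} {g : ι → E → ℝ}

/-- The vectors in `ι → ℝ` lying strictly above `(g i q)_i` for some `q ∈ S`: the set that is
separated from a constant vector in the minimax argument. -/
def strictUpperImage (S : Set E) (g : ι → E → ℝ) : Set (ι → ℝ) :=
  {v | ∃ q ∈ S, ∀ i, g i q < v i}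

theorem isOpen_strictUpperImage [Finite ι] : IsOpen (strictUpperImage S g) := by
  have : strictUpperImage S g = ⋃ q ∈ S, Set.univ.pi fun i => Set.Ioi (g i q) := by
    ext v
    simp [strictUpperImage]
  rw [this]
  exact isOpen_biUnion fun q _ => isOpen_set_pi Set.finite_univ fun i _ => isOpen_Ioi

theorem strictUpperImage_upward_closed {u v : ι → ℝ} (hu : u ∈ strictUpperImage S g) (huv : u ≤ v) :
    v ∈ strictUpperImage S g :=
  let ⟨q, hq, hgu⟩ := hu
  ⟨q, hq, fun i => (hgu i).trans_le (huv i)⟩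

variable [AddCommGroup E] [Module ℝ E] [Nonempty ι]

theorem convex_strictUpperImage (hg : ∀ i, ConvexOn ℝ S (g i)) :
    Convex ℝ (strictUpperImage S g) := by
  rintro u ⟨q, hq, hu⟩ v ⟨q', hq', hv⟩ a b ha hb hab
  have mem : ∀ i, a • (q, u i) + b • (q', v i) ∈ {p : E × ℝ | p.1 ∈ S ∧ g i p.1 < p.2} := fun i =>
    (hg i).convex_strict_epigraph ⟨hq, hu i⟩ ⟨hq', hv i⟩ ha hb hab
  exact ⟨_, (mem (Classical.arbitrary ι)).1, fun i => (mem i).2⟩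

variable [Fintype ι]

theorem exists_weights_of_notMem_strictUpperImage (hS : S.Nonempty)
    (hg : ∀ i, ConvexOn ℝ S (g i)) {c : ℝ} (hc : (fun _ => c) ∉ strictUpperImage S g) :
    ∃ w : ι → ℝ, (∀ i, 0 ≤ w i) ∧ 0 < ∑ i, w i ∧
      ∀ v ∈ strictUpperImage S g, (∑ i, w i) * c < ∑ i, w i * v i := by
  obtain ⟨f, hf⟩ := geometric_hahn_banach_point_open (convex_strictUpperImage hg)
    isOpen_strictUpperImage hc
  set w : ι → ℝ := fun i => f (Pi.single i 1) with hw
  have f_eq : ∀ v, f v = ∑ i, w i * v i := fun v => by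
    simpa [hw, mul_comm, ← Pi.single_apply, Pi.single_comm] using
      f.toLinearMap.pi_apply_eq_sum_univ v
  obtain ⟨q, hq⟩ := hS
  set u : ι → ℝ := fun i => max c (g i q + 1)
  have hu : u ∈ strictUpperImage S g :=
    ⟨q, hq, fun i => (lt_add_one _).trans_le (le_max_right _ _)⟩
  have w_nonneg : ∀ i, 0 ≤ w i := fun i => by
    by_contra! hwi
    obtain ⟨s, hs⟩ : ∃ s : ℝ, s * w i = f (fun _ => c) - f u := ⟨_, div_mul_cancel₀ _ hwi.ne⟩
    have hs0 : 0 ≤ s := by nlinarith [hf u hu]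
    have mem : u + s • Pi.single i 1 ∈ strictUpperImage S g :=
      strictUpperImage_upward_closed hu <|
        le_add_of_nonneg_right (smul_nonneg hs0 (Pi.single_nonneg.2 zero_le_one))
    have := hf _ mem
    rw [map_add, map_smul, smul_eq_mul, show f (Pi.single i 1) = w i from rfl] at this
    linarith
  simp only [f_eq, ← Finset.sum_mul] at hf
  refine ⟨w, w_nonneg, (Finset.sum_nonneg fun i _ => w_nonneg i).lt_of_ne fun h0 => ?_, hf⟩
  have w_zero : ∀ i, w i = 0 := fun i =>
    (Finset.sum_eq_zero_iff_of_nonneg fun i _ => w_nonneg i).1 h0.symm i (Finset.mem_univ i)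
  simpa [w_zero] using hf u hu

theorem exists_forall_lt_of_forall_sum_lt (hg : ∀ i, ConvexOn ℝ S (g i)) {c : ℝ}
    (h : ∀ p ∈ stdSimplex ℝ ι, ∃ q ∈ S, ∑ i, p i * g i q < c) : ∃ q ∈ S, ∀ i, g i q < c := by
  by_contra hc
  have hS : S.Nonempty :=
    let ⟨q, hq, _⟩ := h _ (single_mem_stdSimplex ℝ (Classical.arbitrary ι))
    ⟨q, hq⟩
  obtain ⟨w, w_nonneg, w_pos, hw⟩ := exists_weights_of_notMem_strictUpperImage hS hg hc
  obtain ⟨q, hq, hlt⟩ := h (fun i => w i / ∑ j, w j)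
    ⟨fun i => div_nonneg (w_nonneg i) w_pos.le, by rw [← Finset.sum_div, div_self w_pos.ne']⟩
  simp only [div_mul_eq_mul_div, ← Finset.sum_div, div_lt_iff₀ w_pos] at hlt
  obtain ⟨ε, hε, hlt_ε⟩ : ∃ ε > 0, ∑ i, w i * g i q + ε * ∑ i, w i = c * ∑ i, w i :=
    ⟨(c * ∑ i, w i - ∑ i, w i * g i q) / ∑ i, w i, div_pos (sub_pos.2 hlt) w_pos, by
      rw [div_mul_cancel₀ _ w_pos.ne', add_sub_cancel]⟩
  have := hw (fun i => g i q + ε) ⟨q, hq, fun i => lt_add_of_pos_right _ hε⟩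
  simp only [mul_add, Finset.sum_add_distrib, ← Finset.sum_mul] at this
  linarith

end Minimax

section FDivergence

open scoped Topology

variable {Z : Type*} [Fintype Z]

/-- The Csiszár `f`-divergence `D_f(q‖p) = ∑ p f(q/p)` of real vectors. -/
def fDiv (f : ℝ → ℝ) (q p : Z → ℝ) : ℝ := ∑ z, p z * f (q z / p z)

/-- The convex function whose `f`-divergence determines the order-`α` Rényi divergence for
`1 ≤ α < ∞`, with the arguments of the latter swapped. -/
def renyiGenerator (α : ℝ≥0∞) (t : ℝ) : ℝ :=
  if α = 1 then -Real.logb 2 t else t ^ (1 - α.toReal)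

/-- The value of the `f`-divergence of `renyiGenerator α` at which the order-`α` Rényi divergence
equals `c`. -/
def renyiThreshold (α : ℝ≥0∞) (c : ℝ) : ℝ :=
  if α = 1 then c else 2 ^ ((α.toReal - 1) * c)

theorem convexOn_rpow_of_nonpos {s : ℝ} (hs : s ≤ 0) :
    ConvexOn ℝ (Set.Ioi 0) fun t : ℝ => t ^ s := by
  have log_convex : ConvexOn ℝ (Set.Ioi 0) fun t => -s * -Real.log t :=
    strictConcaveOn_log_Ioi.concaveOn.neg.smul (neg_nonneg.2 hs)
  have exp_log : ∀ t ∈ Set.Ioi (0 : ℝ), t ^ s = Real.exp (-s * -Real.log t) := fun t ht => by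
    rw [neg_mul_neg, mul_comm, Real.rpow_def_of_pos ht]
  refine ⟨convex_Ioi 0, fun t ht u hu a b ha hb hab => ?_⟩
  simp only [exp_log _ ht, exp_log _ hu, exp_log _ (convex_Ioi 0 ht hu ha hb hab)]
  exact (Real.exp_le_exp.2 (log_convex.2 ht hu ha hb hab)).trans
    (convexOn_exp.2 (Set.mem_univ _) (Set.mem_univ _) ha hb hab)

theorem renyiGenerator_one : renyiGenerator 1 = fun t => -Real.logb 2 t := by
  funext t
  rw [renyiGenerator, if_pos rfl]

theorem renyiGenerator_of_one_lt {α : ℝ≥0∞} (h1 : 1 < α) :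
    renyiGenerator α = fun t => t ^ (1 - α.toReal) := by
  funext t
  rw [renyiGenerator, if_neg h1.ne']

theorem convexOn_renyiGenerator {α : ℝ≥0∞} (h1 : 1 ≤ α) (htop : α ≠ ⊤) :
    ConvexOn ℝ (Set.Ioi 0) (renyiGenerator α) := by
  rcases h1.eq_or_lt with rfl | h1
  · rw [renyiGenerator_one]
    refine (strictConcaveOn_log_Ioi.concaveOn.neg.smul
      (inv_nonneg.2 (Real.log_nonneg one_le_two))).congr fun t _ => ?_
    simp [Real.logb, div_eq_inv_mul]
  · rw [renyiGenerator_of_one_lt h1]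
    exact convexOn_rpow_of_nonpos (sub_nonpos.2 (one_lt_toReal h1 htop).le)

theorem convexOn_fDiv {f : ℝ → ℝ} (hf : ConvexOn ℝ (Set.Ioi 0) f) {p : Z → ℝ} (hp : ∀ z, 0 ≤ p z) :
    ConvexOn ℝ {q | ∀ z, 0 < q z} fun q => fDiv f q p := by
  have convex_pos : Convex ℝ {q : Z → ℝ | ∀ z, 0 < q z} := by
    simpa [Set.pi, Set.mem_Ioi] using convex_pi (s := Set.univ) fun z _ => convex_Ioi (0 : ℝ)
  refine ⟨convex_pos, fun q hq q' hq' a b ha hb hab => ?_⟩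
  simp only [fDiv, smul_eq_mul, Finset.mul_sum, ← Finset.sum_add_distrib]
  refine Finset.sum_le_sum fun z _ => ?_
  rcases (hp z).eq_or_lt with h0 | hpos
  · simp [← h0]
  calc p z * f ((a • q + b • q') z / p z)
      = p z * f (a • (q z / p z) + b • (q' z / p z)) := by
        simp [add_div, mul_div_assoc]
    _ ≤ p z * (a • f (q z / p z) + b • f (q' z / p z)) := by
        gcongr
        exact hf.2 (div_pos (hq z) hpos) (div_pos (hq' z) hpos) ha hb hab
    _ = a * (p z * f (q z / p z)) + b * (p z * f (q' z / p z)) := by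
        simp only [smul_eq_mul]
        ring

theorem fDiv_joint {X Y : Type*} [Fintype X] [Fintype Y] (f : ℝ → ℝ) (p : X → ℝ) (q : Y → ℝ)
    (w : X → Y → ℝ) :
    fDiv f (fun z : X × Y => p z.1 * q z.2) (fun z => p z.1 * w z.1 z.2) =
      ∑ x, p x * fDiv f q (w x) := by
  simp only [fDiv, Fintype.sum_prod_type, Finset.mul_sum]
  refine Finset.sum_congr rfl fun x _ => Finset.sum_congr rfl fun y _ => ?_
  rcases eq_or_ne (p x) 0 with hp | hp
  · simp [hp]
  · rw [mul_div_mul_left _ _ hp, mul_assoc]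

variable {P Q : Z → ℝ≥0∞}

theorem renyiD_one_eq_coe_fDiv (hP : IsDist P) (hQ : ∀ z, Q z ≠ ⊤) (hPQ : ∀ z, Q z = 0 → P z = 0) :
    renyiD 1 P Q = (fDiv (fun t => -Real.logb 2 t) (fun z => (Q z).toReal)
      (fun z => (P z).toReal) : ℝ) := by
  rw [renyiD_one, fDiv, coe_sum_ereal]
  refine Finset.sum_congr rfl fun z _ => ?_
  rcases eq_or_ne (P z) 0 with h0 | h0
  · simp [h0]
  have hdiv0 : P z / Q z ≠ 0 := ENNReal.div_ne_zero.2 ⟨h0, hQ z⟩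
  have hdivtop : P z / Q z ≠ ⊤ := ENNReal.div_ne_top (hP.ne_top z) (mt (hPQ z) h0)
  rw [elog2, if_neg hdiv0, if_neg hdivtop, ENNReal.toReal_div, ← Real.logb_inv, inv_div,
    EReal.coe_mul]

theorem renyiSum_eq_ofReal_fDiv {a : ℝ} (ha : 1 ≤ a) (hP : IsDist P)
    (hPQ : ∀ z, Q z = 0 → P z = 0) :
    renyiSum a P Q = ENNReal.ofReal (fDiv (fun t => t ^ (1 - a)) (fun z => (Q z).toReal)
      (fun z => (P z).toReal)) := by
  rw [renyiSum_eq_sum_mul ha, fDiv, ENNReal.ofReal_sum_of_nonneg fun z _ => by positivity]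
  refine Finset.sum_congr rfl fun z _ => ?_
  rcases eq_or_ne (P z) 0 with h0 | h0
  · simp [h0]
  have hdivtop : P z / Q z ≠ ⊤ := ENNReal.div_ne_top (hP.ne_top z) (mt (hPQ z) h0)
  rw [ENNReal.ofReal_mul ENNReal.toReal_nonneg, ENNReal.ofReal_toReal (hP.ne_top z),
    ← neg_sub a 1, Real.rpow_neg (by positivity), ← Real.inv_rpow (by positivity), inv_div,
    ← ENNReal.toReal_div, ENNReal.toReal_rpow, ENNReal.ofReal_toReal]
  exact ENNReal.rpow_ne_top_of_nonneg (sub_nonneg.2 ha) hdivtop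

theorem renyiD_lt_coe_iff_fDiv_lt {α : ℝ≥0∞} (h1 : 1 ≤ α) (htop : α ≠ ⊤) (hP : IsDist P)
    (hQ : ∀ z, Q z ≠ ⊤) (hPQ : ∀ z, Q z = 0 → P z = 0) {c : ℝ} :
    renyiD α P Q < c ↔
      fDiv (renyiGenerator α) (fun z => (Q z).toReal) (fun z => (P z).toReal) <
        renyiThreshold α c := by
  rcases h1.eq_or_lt with rfl | h1
  · rw [renyiD_one_eq_coe_fDiv hP hQ hPQ, renyiGenerator_one, renyiThreshold, if_pos rfl,
      EReal.coe_lt_coe_iff]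
  · rw [renyiGenerator_of_one_lt h1, renyiThreshold, if_neg h1.ne', renyiD_lt_coe_iff h1 htop,
      renyiSum_eq_ofReal_fDiv (one_lt_toReal h1 htop).le hP hPQ, ← ENNReal.ofReal_ofNat,
      ENNReal.ofReal_rpow_of_pos two_pos, ENNReal.ofReal_lt_ofReal_iff (by positivity)]

theorem hasDerivAt_fDiv_rpow {p q : Z → ℝ} (hpq : ∀ z, p z ≠ 0 → 0 < q z / p z) :
    HasDerivAt (fun a : ℝ => fDiv (fun t => t ^ (1 - a)) q p)
      (fDiv (fun t => -Real.log t) q p) 1 := by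
  refine HasDerivAt.fun_sum fun z _ => ?_
  rcases eq_or_ne (p z) 0 with h0 | h0
  · simpa [h0] using hasDerivAt_const (1 : ℝ) (0 : ℝ)
  · simpa using ((hasDerivAt_id (1 : ℝ)).const_sub 1).const_rpow (hpq z h0) |>.const_mul (p z)

theorem eventually_renyiD_lt (hP : IsDist P) (hQ : ∀ z, Q z ≠ ⊤) (hPQ : ∀ z, Q z = 0 → P z = 0)
    {c : ℝ} (h : renyiD 1 P Q < c) :
    ∀ᶠ a in 𝓝[>] (1 : ℝ), renyiD (ENNReal.ofReal a) P Q < c := by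
  set p : Z → ℝ := fun z => (P z).toReal
  set q : Z → ℝ := fun z => (Q z).toReal
  have ratio_pos : ∀ z, p z ≠ 0 → 0 < q z / p z := fun z hz =>
    have hPz : P z ≠ 0 := fun h0 => hz (by simp [p, h0])
    div_pos (ENNReal.toReal_pos (mt (hPQ z) hPz) (hQ z)) (ENNReal.toReal_pos hPz (hP.ne_top z))
  -- The inequality at order `a` says that this function is positive at `a`; it vanishes at `1`.
  have hderiv : HasDerivAt (fun a : ℝ => (2 : ℝ) ^ ((a - 1) * c) - fDiv (fun t => t ^ (1 - a)) q p)
      (Real.log 2 * c - fDiv (fun t => -Real.log t) q p) 1 := by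
    simpa using ((((hasDerivAt_id (1 : ℝ)).sub_const 1).mul_const c).const_rpow two_pos).fun_sub
      (hasDerivAt_fDiv_rpow ratio_pos)
  have deriv_pos : 0 < Real.log 2 * c - fDiv (fun t => -Real.log t) q p := by
    rw [renyiD_one_eq_coe_fDiv hP hQ hPQ, EReal.coe_lt_coe_iff] at h
    have log_eq : fDiv (fun t => -Real.log t) q p =
        Real.log 2 * fDiv (fun t => -Real.logb 2 t) q p := by
      simp only [fDiv, Finset.mul_sum, Real.logb]
      exact Finset.sum_congr rfl fun z _ => by field_simp
    rw [log_eq, ← mul_sub]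
    exact mul_pos (Real.log_pos one_lt_two) (sub_pos.2 h)
  have sign_eq := eventually_nhdsWithin_sign_eq_of_deriv_pos (hderiv.deriv.symm ▸ deriv_pos)
    (by simp [fDiv, p, hP.sum_toReal])
  filter_upwards [sign_eq.filter_mono nhdsWithin_le_nhds, self_mem_nhdsWithin]
    with a hsign (ha : 1 < a)
  have hα : 1 < ENNReal.ofReal a := ENNReal.one_lt_ofReal.2 ha
  rw [renyiD_lt_coe_iff_fDiv_lt hα.le ENNReal.ofReal_ne_top hP hQ hPQ, renyiGenerator_of_one_lt hα,
    renyiThreshold, if_neg hα.ne', ENNReal.toReal_ofReal (zero_le_one.trans ha.le)]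
  rwa [sign_pos (sub_pos.2 ha), sign_eq_one_iff, sub_pos] at hsign

theorem chD_lt_iff {X Y : Type*} [Fintype X] [Nonempty X] [Fintype Y] {α : ℝ≥0∞}
    {W N : X → Y → ℝ≥0∞} {c : EReal} : chD α W N < c ↔ ∀ x, renyiD α (W x) (N x) < c := by
  obtain ⟨x, hx⟩ := exists_eq_ciSup_of_finite (f := fun x => renyiD α (W x) (N x))
  exact ⟨fun h x => (le_iSup (fun x => renyiD α (W x) (N x)) x).trans_lt h,
    fun h => (hx.symm.trans_lt (h x) :)⟩

theorem exists_one_lt_chD_lt {X Y : Type*} [Fintype X] [Nonempty X] [Fintype Y]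
    {W : X → Y → ℝ≥0∞} (hW : IsChannel W) {Q : Y → ℝ≥0∞} (hQ : IsDist Q) (hQ0 : ∀ y, Q y ≠ 0)
    {c : ℝ} (h : chD 1 W (fun _ => Q) < c) :
    ∃ α : ℝ≥0∞, 1 < α ∧ α ≠ ⊤ ∧ chD α W (fun _ => Q) < c := by
  simp only [chD_lt_iff] at h ⊢
  have rows : ∀ᶠ a in 𝓝[>] (1 : ℝ), ∀ x, renyiD (ENNReal.ofReal a) (W x) Q < c :=
    Filter.eventually_all.2 fun x =>
      eventually_renyiD_lt (hW x) hQ.ne_top (fun y hy => absurd hy (hQ0 y)) (h x)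
  obtain ⟨a, ha, h1⟩ := (rows.and self_mem_nhdsWithin).exists
  exact ⟨ENNReal.ofReal a, ENNReal.one_lt_ofReal.2 h1, ENNReal.ofReal_ne_top, ha⟩

end FDivergence

section Radius

variable {X Y : Type*} [Fintype X] [Fintype Y] {W : X → Y → ℝ≥0∞} {P : X → ℝ≥0∞}
  {Q : Y → ℝ≥0∞} {α : ℝ≥0∞} {c : ℝ}

theorem isDist_ofReal {p : X → ℝ} (hp : p ∈ stdSimplex ℝ X) :
    IsDist fun x => ENNReal.ofReal (p x) := by
  rw [IsDist, ← ENNReal.ofReal_sum_of_nonneg fun x _ => hp.1 x, hp.2, ENNReal.ofReal_one]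

theorem IsDist.toReal_mem_stdSimplex (hP : IsDist P) : (fun x => (P x).toReal) ∈ stdSimplex ℝ X :=
  ⟨fun _ => ENNReal.toReal_nonneg, hP.sum_toReal⟩

theorem IsChannel.margX_joint (hW : IsChannel W) (P : X → ℝ≥0∞) : margX (joint P W) = P := by
  funext x
  simp only [margX, joint, ← Finset.mul_sum, hW x, mul_one]

theorem IsChannel.isDist_joint (hW : IsChannel W) (hP : IsDist P) : IsDist (joint P W) := by
  calc ∑ z, joint P W z = ∑ x, margX (joint P W) x := Fintype.sum_prod_type _
    _ = 1 := by rw [hW.margX_joint, hP]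

theorem chD_top_le_renyiD_joint (hP0 : ∀ x, P x ≠ 0) (hPtop : ∀ x, P x ≠ ⊤) :
    chD ⊤ W (fun _ => Q) ≤ renyiD ⊤ (joint P W) (fun z => P z.1 * Q z.2) := by
  refine iSup_le fun x => ?_
  rw [renyiD_top, renyiD_top]
  refine elog2_mono (iSup_le fun y => le_iSup_of_le (x, y) ?_)
  rw [joint, ENNReal.mul_div_mul_left _ _ (hP0 x) (hPtop x)]

theorem isDist_uniform (Y : Type*) [Fintype Y] [Nonempty Y] :
    IsDist fun _ : Y => (Fintype.card Y : ℝ≥0∞)⁻¹ := by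
  rw [IsDist, Finset.sum_const, Finset.card_univ, nsmul_eq_mul]
  exact ENNReal.mul_inv_cancel (by simp) (by simp)

variable [Nonempty Y]

theorem exists_pos_isDist_two_rpow_mul_le {d : ℝ} (hd : 0 < d) (hQ : IsDist Q) :
    ∃ Q' : Y → ℝ≥0∞, IsDist Q' ∧ (∀ y, Q' y ≠ 0) ∧ ∀ y, 2 ^ (-d) * Q y ≤ Q' y := by
  have lt_one : (2 : ℝ≥0∞) ^ (-d) < 1 := by
    rw [ENNReal.rpow_neg, ENNReal.inv_lt_one]
    exact ENNReal.one_lt_rpow ENNReal.one_lt_two hd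
  refine ⟨fun y => 2 ^ (-d) * Q y + (1 - 2 ^ (-d)) * (Fintype.card Y : ℝ≥0∞)⁻¹, ?_, fun y => ?_,
    fun y => le_self_add⟩
  · rw [IsDist, Finset.sum_add_distrib, ← Finset.mul_sum, ← Finset.mul_sum, hQ, isDist_uniform Y,
      mul_one, mul_one, add_tsub_cancel_of_le lt_one.le]
  · simp [(tsub_pos_of_lt lt_one).ne']

theorem exists_pos_isDist_renyiD_joint_lt (h1 : 1 ≤ α) (hW : IsChannel W) (hP : IsDist P)
    (h : renyiCap α W < c) :
    ∃ Q : Y → ℝ≥0∞, IsDist Q ∧ (∀ y, Q y ≠ 0) ∧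
      renyiD α (joint P W) (fun z => P z.1 * Q z.2) < c := by
  obtain ⟨b, hb, hbc⟩ := EReal.lt_iff_exists_real_btwn.1 h
  have mi_lt : renyiMI α (joint P W) < b :=
    (le_iSup (fun P : {P : X → ℝ≥0∞ // IsDist P} => renyiMI α (joint P.1 W)) ⟨P, hP⟩).trans_lt hb
  obtain ⟨⟨Q, hQ⟩, hQb⟩ := iInf_lt_iff.1 mi_lt
  rw [hW.margX_joint] at hQb
  have gap_pos : 0 < c - b := sub_pos.2 (EReal.coe_lt_coe_iff.1 hbc)
  obtain ⟨Q', hQ', hpos, hle⟩ := exists_pos_isDist_two_rpow_mul_le gap_pos hQ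
  refine ⟨Q', hQ', hpos, ?_⟩
  calc renyiD α (joint P W) (fun z => P z.1 * Q' z.2)
      ≤ (c - b : ℝ) + renyiD α (joint P W) (fun z => P z.1 * Q z.2) :=
        renyiD_le_add h1 (hW.isDist_joint hP) fun z =>
          (mul_left_comm _ _ _).trans_le (mul_le_mul' le_rfl (hle z.2))
    _ < (c - b : ℝ) + (b : EReal) := EReal.add_lt_add_left_coe hQb _
    _ = c := by rw [← EReal.coe_add, sub_add_cancel]

theorem exists_pos_mem_stdSimplex_sum_fDiv_lt (h1 : 1 ≤ α) (htop : α ≠ ⊤) (hW : IsChannel W)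
    (h : renyiCap α W < c) {p : X → ℝ} (hp : p ∈ stdSimplex ℝ X) :
    ∃ q ∈ stdSimplex ℝ Y ∩ {q | ∀ y, 0 < q y},
      ∑ x, p x * fDiv (renyiGenerator α) q (fun y => (W x y).toReal) < renyiThreshold α c := by
  have hP := isDist_ofReal hp
  obtain ⟨Q, hQ, hQ0, hlt⟩ := exists_pos_isDist_renyiD_joint_lt h1 hW hP h
  refine ⟨fun y => (Q y).toReal,
    ⟨hQ.toReal_mem_stdSimplex, fun y => ENNReal.toReal_pos (hQ0 y) (hQ.ne_top y)⟩, ?_⟩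
  rw [renyiD_lt_coe_iff_fDiv_lt h1 htop (hW.isDist_joint hP)
    (fun z => ENNReal.mul_ne_top ENNReal.ofReal_ne_top (hQ.ne_top z.2))
    (fun z hz => by simp [joint, (mul_eq_zero.1 hz).resolve_right (hQ0 z.2)])] at hlt
  simp only [joint, ENNReal.toReal_mul, ENNReal.toReal_ofReal (hp.1 _)] at hlt
  rwa [fDiv_joint _ p (fun y => (Q y).toReal) fun x y => (W x y).toReal] at hlt

variable [Nonempty X]

theorem exists_pos_isDist_chD_top_lt (hW : IsChannel W) (h : renyiCap ⊤ W < c) :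
    ∃ Q : Y → ℝ≥0∞, IsDist Q ∧ (∀ y, Q y ≠ 0) ∧ chD ⊤ W (fun _ => Q) < c := by
  have hunif := isDist_uniform X
  obtain ⟨Q, hQ, hQ0, hlt⟩ := exists_pos_isDist_renyiD_joint_lt le_top hW hunif h
  exact ⟨Q, hQ, hQ0, (chD_top_le_renyiD_joint (by simp) hunif.ne_top).trans_lt hlt⟩

theorem exists_pos_isDist_chD_lt_of_ne_top (h1 : 1 ≤ α) (htop : α ≠ ⊤) (hW : IsChannel W)
    (h : renyiCap α W < c) :
    ∃ Q : Y → ℝ≥0∞, IsDist Q ∧ (∀ y, Q y ≠ 0) ∧ chD α W (fun _ => Q) < c := by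
  have convex : ∀ x, ConvexOn ℝ (stdSimplex ℝ Y ∩ {q | ∀ y, 0 < q y}) fun q =>
      fDiv (renyiGenerator α) q (fun y => (W x y).toReal) := fun x =>
    have hconv := convexOn_fDiv (convexOn_renyiGenerator h1 htop) fun y =>
      ENNReal.toReal_nonneg (a := W x y)
    hconv.subset Set.inter_subset_right ((convex_stdSimplex ℝ Y).inter hconv.1)
  obtain ⟨q, ⟨hq, hq0⟩, hlt⟩ := exists_forall_lt_of_forall_sum_lt convex fun p hp =>
    exists_pos_mem_stdSimplex_sum_fDiv_lt h1 htop hW h hp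
  have ofReal_ne_zero : ∀ y, ENNReal.ofReal (q y) ≠ 0 := fun y => (ENNReal.ofReal_pos.2 (hq0 y)).ne'
  refine ⟨fun y => ENNReal.ofReal (q y), isDist_ofReal hq, ofReal_ne_zero, chD_lt_iff.2 fun x => ?_⟩
  rw [renyiD_lt_coe_iff_fDiv_lt h1 htop (hW x) (fun _ => ENNReal.ofReal_ne_top)
    fun y hy => absurd hy (ofReal_ne_zero y)]
  simpa only [ENNReal.toReal_ofReal (hq.1 _)] using hlt x

theorem exists_pos_isDist_chD_lt (h1 : 1 ≤ α) (hW : IsChannel W) (h : renyiCap α W < c) :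
    ∃ Q : Y → ℝ≥0∞, IsDist Q ∧ (∀ y, Q y ≠ 0) ∧ chD α W (fun _ => Q) < c := by
  rcases eq_or_ne α ⊤ with rfl | htop
  · exact exists_pos_isDist_chD_top_lt hW h
  · exact exists_pos_isDist_chD_lt_of_ne_top h1 htop hW h

end Radius

/-- **Achievability of the strong converse exponent for `α ∈ [1,∞]`** (Theorem 15):
`E_sc^{(α)}(W,r) ≤ |I_α(W) - r|⁺`. -/
theorem strong_converse_exponent_achievability_ge_one
    {X Y : Type*} [Fintype X] [Fintype Y] [Nonempty X] [Nonempty Y]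
    (W : X → Y → ℝ≥0∞) (hW : IsChannel W)
    (α : ℝ≥0∞) (hα : 1 ≤ α) (r : ℝ) (hr : 0 ≤ r) :
    Esc α W r ≤ max (renyiCap α W - (r : EReal)) 0 := by
  refine EReal.le_of_forall_lt_iff_le.1 fun m hm => ?_
  obtain ⟨hcap, hm0⟩ := max_lt_iff.1 hm
  have cap_lt : renyiCap α W < ((r + m : ℝ) : EReal) := by
    rw [add_comm, EReal.coe_add]
    exact (EReal.sub_lt_iff (.inl (EReal.coe_ne_bot r)) (.inl (EReal.coe_ne_top r))).1 hcap
  have m_nonneg : 0 ≤ m := EReal.coe_nonneg.1 hm0.le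
  obtain ⟨Q, hQ, hQ0, hlt⟩ := exists_pos_isDist_chD_lt hα hW cap_lt
  rcases hα.eq_or_lt with rfl | h1
  · obtain ⟨β, h1, htop, hβ⟩ := exists_one_lt_chD_lt hW hQ hQ0 hlt
    exact (esc_one_le_of_one_lt h1 htop hW r).trans
      (esc_le_of_one_lt h1 hW hQ hQ0 hr m_nonneg hβ.le)
  · exact esc_le_of_one_lt h1 hW hQ hQ0 hr m_nonneg hlt.le

end RST
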